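/- Let ρ^N be an exchangeable density operator on ℍ^{⊗N}, σ a density operator on ℍ, and k ≥ 1 with 2k ≤ N. Then D(ρ^{N:(k)} ‖ σ^{⊗k}) ≤ (N/⌊N/k⌋)·(1/N)·D(ρ^N ‖ σ^{⊗N}) ≤ (2k/N)·D(ρ^N ‖ σ^{⊗N}). -/

import Mathlib

open Matrix
open scoped ComplexOrder

/-- Matrix logarithm via the continuous functional calculus. -/
noncomputable def mlog {m : Type*} [Fintype m] [DecidableEq m] (M : Matrix m m ℂ) :
    Matrix m m ℂ := cfc Real.log M

/-- Umegaki relative entropy with values in `EReal`: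
`D(ρ‖σ) = tr(ρ(log ρ − log σ))` when `supp ρ ⊆ supp σ`, and `+∞` otherwise. -/
noncomputable def relEntE {m : Type*} [Fintype m] [DecidableEq m]
    (ρ σ : Matrix m m ℂ) : EReal :=
  open scoped Classical in
  if ∀ v : m → ℂ, σ.mulVec v = 0 → ρ.mulVec v = 0 then
    (((ρ * (mlog ρ - mlog σ)).trace).re : EReal)
  else ⊤

/-- The tensor power `ϱ^{⊗ι}` over an index type `ι`. -/
noncomputable def tensorPowOn {n : ℕ} (ι : Type*) [Fintype ι]
    (ϱ : Matrix (Fin n) (Fin n) ℂ) : Matrix (ι → Fin n) (ι → Fin n) ℂ :=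
  Matrix.of fun x y => ∏ l : ι, ϱ (x l) (y l)

/-- Extension of a configuration on the first `k` sites by a configuration on the rest. -/
def firstExt {n N k : ℕ} (x : Fin k → Fin n) (g : {i : Fin N // ¬ (i : ℕ) < k} → Fin n) :
    Fin N → Fin n :=
  fun i => if h : (i : ℕ) < k then x ⟨i, h⟩ else g ⟨i, h⟩

/-- The `k`-particle marginal of an `N`-particle state (partial trace over the last
`N − k` factors). -/
noncomputable def kMarginal {n N : ℕ} (k : ℕ)
    (ρ : Matrix (Fin N → Fin n) (Fin N → Fin n) ℂ) :
    Matrix (Fin k → Fin n) (Fin k → Fin n) ℂ :=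
  Matrix.of fun x y =>
    ∑ g : {i : Fin N // ¬ (i : ℕ) < k} → Fin n, ρ (firstExt x g) (firstExt y g)

/-- Exchangeability: invariance under permutations of the tensor factors. -/
def Exchangeable {n N : ℕ} (ρ : Matrix (Fin N → Fin n) (Fin N → Fin n) ℂ) : Prop :=
  ∀ π : Equiv.Perm (Fin N), ∀ x y : Fin N → Fin n, ρ (x ∘ π) (y ∘ π) = ρ x y

/-!
Let `ρ` be a bipartite state with marginals `ρ₁`, `ρ₂`. On the support of `A ⊗ B` the logarithm of
`A ⊗ B` is `log A ⊗ 1 + 1 ⊗ log B`, so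
`D(ρ ‖ A ⊗ B) = D(ρ₁ ‖ A) + D(ρ₂ ‖ B) + D(ρ ‖ ρ₁ ⊗ ρ₂)`,
and the last term, the mutual information, is nonnegative by Klein's inequality. Hence
`D(ρ ‖ A ⊗ B) ≥ D(ρ₁ ‖ A) + D(ρ₂ ‖ B)`. Splitting off blocks of `k` sites one at a time from an
exchangeable state, each block has the same marginal, and what remains after `⌊N/k⌋` blocks has
nonnegative relative entropy; therefore `⌊N/k⌋ D(ρ^(k) ‖ σ^⊗k) ≤ D(ρ ‖ σ^⊗N)`. The second bound
is `N ≤ 2k⌊N/k⌋`.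
-/

open scoped Kronecker

section Matrix

variable {m l R : Type*}

lemma trace_submatrix_equiv [Fintype m] [Fintype l] [AddCommMonoid R] (M : Matrix m m R)
    (e : l ≃ m) : (M.submatrix e e).trace = M.trace :=
  e.sum_comp fun i => M i i

lemma kronecker_submatrix_prodComm [CommMagma R] (A : Matrix m m R) (B : Matrix l l R) :
    (A ⊗ₖ B).submatrix (Equiv.prodComm l m) (Equiv.prodComm l m) = B ⊗ₖ A := by
  ext x y
  exact mul_comm _ _

lemma isHermitian_kronecker [CommRing R] [StarRing R] {A : Matrix m m R} {B : Matrix l l R}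
    (hA : A.IsHermitian) (hB : B.IsHermitian) : (A ⊗ₖ B).IsHermitian := by
  rw [IsHermitian, conjTranspose_kronecker, hA, hB]

lemma exists_mul_mul_self_eq [Field R] [Fintype m] [Fintype l] (M : Matrix m l R) :
    ∃ G : Matrix l m R, M * G * M = M := by
  classical
  obtain ⟨g, hg⟩ := M.mulVecLin.rangeRestrict.exists_rightInverse_of_surjective
    M.mulVecLin.range_rangeRestrict
  obtain ⟨G, hG⟩ := LinearMap.exists_extend g
  refine ⟨G.toMatrix', Matrix.toLin'.injective (LinearMap.ext fun v => ?_)⟩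
  have hGM : G (M *ᵥ v) = g (M.mulVecLin.rangeRestrict v) :=
    LinearMap.congr_fun hG (M.mulVecLin.rangeRestrict v)
  rw [toLin'_mul, toLin'_mul, toLin'_toMatrix', LinearMap.comp_apply, LinearMap.comp_apply,
    toLin'_apply M v, hGM]
  exact congrArg Subtype.val (LinearMap.congr_fun hg (M.mulVecLin.rangeRestrict v))

end Matrix

section Spectral

variable {m l : Type*} [Fintype m] [DecidableEq m] [Fintype l] [DecidableEq l]

/-- The algebra homomorphism `q ↦ U diag(q) U⋆` for a unitary `U`; its values are the Hermitian
matrices that `U` diagonalizes. -/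
noncomputable def conjDiagonal (U : unitaryGroup m ℂ) : (m → ℝ) →ₐ[ℝ] Matrix m m ℂ :=
  (Unitary.conjStarAlgAut ℝ (Matrix m m ℂ) U).toAlgEquiv.toAlgHom.comp
    ((diagonalAlgHom ℝ).comp (Complex.ofRealAm.compLeft m))

lemma conjDiagonal_apply (U : unitaryGroup m ℂ) (q : m → ℝ) :
    conjDiagonal U q = (U : Matrix m m ℂ) * diagonal (fun i => (q i : ℂ)) * (U : Matrix m m ℂ)ᴴ :=
  rfl

lemma isHermitian_conjDiagonal (U : unitaryGroup m ℂ) (q : m → ℝ) :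
    (conjDiagonal U q).IsHermitian := by
  rw [conjDiagonal_apply]
  exact isHermitian_mul_mul_conjTranspose _
    (isHermitian_diagonal_of_self_adjoint _ (by ext; simp))

lemma exists_eq_conjDiagonal {M : Matrix m m ℂ} (hM : M.IsHermitian) :
    ∃ U q, M = conjDiagonal U q :=
  ⟨hM.eigenvectorUnitary, hM.eigenvalues, hM.spectral_theorem⟩

lemma exists_nonneg_eq_conjDiagonal {M : Matrix m m ℂ} (hM : M.PosSemidef) :
    ∃ U, ∃ q : m → ℝ, (∀ i, 0 ≤ q i) ∧ M = conjDiagonal U q :=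
  ⟨hM.1.eigenvectorUnitary, hM.1.eigenvalues, hM.eigenvalues_nonneg, hM.1.spectral_theorem⟩

-- On the finite set of eigenvalues `f` agrees with a polynomial, and polynomials commute with
-- algebra homomorphisms.
lemma cfc_conjDiagonal (f : ℝ → ℝ) (U : unitaryGroup m ℂ) (q : m → ℝ) :
    cfc f (conjDiagonal U q) = conjDiagonal U (f ∘ q) := by
  set P := Lagrange.interpolate (Finset.univ.image q) id f
  have hP (i : m) : P.eval (q i) = f (q i) :=
    Lagrange.eval_interpolate_at_node f Function.injective_id.injOn
      (Finset.mem_image_of_mem q (Finset.mem_univ i))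
  have hf : (spectrum ℝ (conjDiagonal U q)).EqOn f (fun x => P.eval x) := by
    intro x hx
    obtain ⟨i, rfl⟩ : ∃ i, x = q i := by
      simpa [Pi.spectrum_eq, spectrum.mem_iff, sub_eq_zero] using
        AlgHom.spectrum_apply_subset (conjDiagonal U) q hx
    exact (hP i).symm
  have hPq : Polynomial.aeval q P = f ∘ q := by
    ext i
    simpa using hP i
  rw [cfc_congr hf, cfc_polynomial P _ (isHermitian_conjDiagonal U q).isSelfAdjoint,
    Polynomial.aeval_algHom_apply, hPq]

lemma mlog_conjDiagonal (U : unitaryGroup m ℂ) (q : m → ℝ) :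
    mlog (conjDiagonal U q) = conjDiagonal U (Real.log ∘ q) :=
  cfc_conjDiagonal Real.log U q

lemma trace_conjDiagonal_mul_conjDiagonal (U V : unitaryGroup m ℂ) (p q : m → ℝ) :
    (conjDiagonal U p * conjDiagonal V q).trace =
      ((∑ i, ∑ j, p i * q j * Complex.normSq ((U⁻¹ * V : unitaryGroup m ℂ) i j) : ℝ) : ℂ) := by
  set W : Matrix m m ℂ := ((U⁻¹ * V : unitaryGroup m ℂ) : Matrix m m ℂ)
  have hW : W = (U : Matrix m m ℂ)ᴴ * (V : Matrix m m ℂ) := rfl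
  have htrace : (conjDiagonal U p * conjDiagonal V q).trace =
      (diagonal (fun i => (p i : ℂ)) * (W * diagonal (fun j => (q j : ℂ)) * Wᴴ)).trace := by
    rw [conjDiagonal_apply, conjDiagonal_apply, Matrix.mul_assoc, Matrix.mul_assoc,
      Matrix.trace_mul_comm, hW, conjTranspose_mul, conjTranspose_conjTranspose]
    simp only [Matrix.mul_assoc]
  rw [htrace]
  simp only [Matrix.trace, diag_apply, diagonal_mul, Matrix.mul_apply (N := Wᴴ), mul_diagonal,
    conjTranspose_apply, Finset.mul_sum]
  push_cast
  refine Finset.sum_congr rfl fun i _ => Finset.sum_congr rfl fun j _ => ?_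
  rw [Complex.normSq_eq_conj_mul_self, RCLike.star_def]
  ring

lemma conjDiagonal_kronecker (U : unitaryGroup m ℂ) (V : unitaryGroup l ℂ) (p : m → ℝ)
    (q : l → ℝ) : conjDiagonal U p ⊗ₖ conjDiagonal V q =
      conjDiagonal ⟨_, kronecker_mem_unitary U.2 V.2⟩ (fun x => p x.1 * q x.2) := by
  simp only [conjDiagonal_apply, mul_kronecker_mul, diagonal_kronecker_diagonal,
    conjTranspose_kronecker, Complex.ofReal_mul]

-- Without the factor `A ⊗ₖ B` this fails on the kernel, where `Real.log 0 = 0` breaks the product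
-- rule of the logarithm.
lemma kronecker_mul_mlog_kronecker {A : Matrix m m ℂ} {B : Matrix l l ℂ} (hA : A.IsHermitian)
    (hB : B.IsHermitian) :
    (A ⊗ₖ B) * mlog (A ⊗ₖ B) = (A ⊗ₖ B) * (mlog A ⊗ₖ 1 + 1 ⊗ₖ mlog B) := by
  obtain ⟨U, p, rfl⟩ := exists_eq_conjDiagonal hA
  obtain ⟨V, q, rfl⟩ := exists_eq_conjDiagonal hB
  rw [← map_one (conjDiagonal U), ← map_one (conjDiagonal V), mlog_conjDiagonal,
    mlog_conjDiagonal]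
  simp only [conjDiagonal_kronecker, mlog_conjDiagonal, ← map_mul, ← map_add]
  congr 1
  ext ⟨i, j⟩
  by_cases hpq : p i * q j = 0
  · simp [hpq]
  · simp [Real.log_mul (left_ne_zero_of_mul hpq) (right_ne_zero_of_mul hpq)]

lemma cfc_submatrix (f : ℝ → ℝ) (e : l ≃ m) {M : Matrix m m ℂ} (hM : M.IsHermitian) :
    cfc f (M.submatrix e e) = (cfc f M).submatrix e e := by
  let φ : Matrix m m ℂ →⋆ₐ[ℝ] Matrix l l ℂ :=
    { (reindexAlgEquiv ℝ ℂ e.symm).toAlgHom with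
      map_star' := fun X => (conjTranspose_submatrix X e e).symm }
  exact (φ.map_cfc f M (finite_real_spectrum.continuousOn _)
    (continuous_id.matrix_submatrix e e) hM.isSelfAdjoint (hM.submatrix e).isSelfAdjoint).symm

lemma mlog_submatrix (e : l ≃ m) {M : Matrix m m ℂ} (hM : M.IsHermitian) :
    mlog (M.submatrix e e) = (mlog M).submatrix e e :=
  cfc_submatrix Real.log e hM

end Spectral

section RelativeEntropy

variable {m l : Type*} [Fintype m] [Fintype l] {ρ τ : Matrix m m ℂ}

/-- The support of `ρ` is contained in that of `τ`, expressed through the kernels: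
`ker τ ⊆ ker ρ`. -/
def SupportLE (ρ τ : Matrix m m ℂ) : Prop :=
  ∀ v : m → ℂ, τ *ᵥ v = 0 → ρ *ᵥ v = 0

lemma supportLE_mul_left (Y τ : Matrix m m ℂ) : SupportLE (Y * τ) τ := fun v hv => by
  rw [← mulVec_mulVec, hv, mulVec_zero]

lemma SupportLE.mul_eq_zero {o : Type*} (h : SupportLE ρ τ) {X : Matrix m o ℂ}
    (hX : τ * X = 0) : ρ * X = 0 := by
  ext i j
  exact congrFun (h (X.col j) (funext fun i => congrFun₂ hX i j)) i

lemma SupportLE.submatrix (h : SupportLE ρ τ) (e : l ≃ m) :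
    SupportLE (ρ.submatrix e e) (τ.submatrix e e) := fun v hv => by
  rw [submatrix_mulVec_equiv] at hv ⊢
  rw [h _ (e.surjective.injective_comp_right hv), Pi.zero_comp]

lemma supportLE_submatrix_iff (e : l ≃ m) :
    SupportLE (ρ.submatrix e e) (τ.submatrix e e) ↔ SupportLE ρ τ :=
  ⟨fun h => by simpa using h.submatrix e.symm, fun h => h.submatrix e⟩

lemma supportLE_iff_exists_eq_mul : SupportLE ρ τ ↔ ∃ Y, ρ = Y * τ := by
  classical
  refine ⟨fun h => ?_, fun ⟨Y, hY⟩ => hY ▸ supportLE_mul_left Y τ⟩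
  obtain ⟨G, hG⟩ := exists_mul_mul_self_eq τ
  have hρG : ρ * (1 - G * τ) = 0 :=
    h.mul_eq_zero (by rw [Matrix.mul_sub, Matrix.mul_one, ← Matrix.mul_assoc, hG, sub_self])
  refine ⟨ρ * G, ?_⟩
  rwa [Matrix.mul_sub, Matrix.mul_one, sub_eq_zero, ← Matrix.mul_assoc] at hρG

variable [DecidableEq m]

/-- The finite branch of the relative entropy `relEntE`; it is the relative entropy only
when `SupportLE ρ τ`. -/
noncomputable def relEnt (ρ τ : Matrix m m ℂ) : ℝ :=
  (ρ * (mlog ρ - mlog τ)).trace.re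

lemma relEntE_of_supportLE (h : SupportLE ρ τ) : relEntE ρ τ = relEnt ρ τ :=
  if_pos h

lemma relEntE_of_not_supportLE (h : ¬ SupportLE ρ τ) : relEntE ρ τ = ⊤ :=
  if_neg h

lemma relEntE_submatrix [DecidableEq l] (hρ : ρ.IsHermitian) (hτ : τ.IsHermitian) (e : l ≃ m) :
    relEntE (ρ.submatrix e e) (τ.submatrix e e) = relEntE ρ τ := by
  by_cases h : SupportLE ρ τ
  · rw [relEntE_of_supportLE h, relEntE_of_supportLE (h.submatrix e), relEnt, relEnt,
      mlog_submatrix e hρ, mlog_submatrix e hτ, ← trace_submatrix_equiv _ e,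
      ← submatrix_mul_equiv _ _ _ e]
    rfl
  · rw [relEntE_of_not_supportLE h,
      relEntE_of_not_supportLE (mt (supportLE_submatrix_iff e).1 h)]

lemma sub_le_mul_log_sub_log {p q : ℝ} (hp : 0 ≤ p) (hq : 0 < q) :
    p - q ≤ p * (Real.log p - Real.log q) := by
  obtain rfl | hp := hp.eq_or_lt
  · simpa using hq.le
  · have hlog := mul_le_mul_of_nonneg_left (Real.one_sub_inv_le_log_of_pos (div_pos hp hq)) hp.le
    rwa [inv_div, mul_sub, mul_one, mul_div_cancel₀ _ hp.ne', Real.log_div hp.ne' hq.ne'] at hlog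

lemma relEnt_conjDiagonal (U V : unitaryGroup m ℂ) (p q : m → ℝ) :
    relEnt (conjDiagonal U p) (conjDiagonal V q) =
      ∑ i, ∑ j, p i * (Real.log (p i) - Real.log (q j)) *
        Complex.normSq ((U⁻¹ * V : unitaryGroup m ℂ) i j) := by
  have hself : conjDiagonal U p * conjDiagonal U (Real.log ∘ p) =
      conjDiagonal U (p * (Real.log ∘ p)) * conjDiagonal V 1 := by
    rw [map_one, Matrix.mul_one, map_mul]
  rw [relEnt, mlog_conjDiagonal, mlog_conjDiagonal, Matrix.mul_sub, hself, trace_sub,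
    trace_conjDiagonal_mul_conjDiagonal, trace_conjDiagonal_mul_conjDiagonal,
    ← Complex.ofReal_sub, Complex.ofReal_re]
  simp only [← Finset.sum_sub_distrib]
  refine Finset.sum_congr rfl fun i _ => Finset.sum_congr rfl fun j _ => ?_
  simp only [Pi.mul_apply, Pi.one_apply, Function.comp_apply]
  ring

lemma SupportLE.mul_normSq_eq_zero {U V : unitaryGroup m ℂ} {p q : m → ℝ}
    (h : SupportLE (conjDiagonal U p) (conjDiagonal V q)) {j : m} (hj : q j = 0) (i : m) :
    p i * Complex.normSq ((U⁻¹ * V : unitaryGroup m ℂ) i j) = 0 := by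
  have hker : conjDiagonal V q * conjDiagonal V (Pi.single j 1) = 0 := by
    rw [← map_mul, ← Pi.single_mul_right, hj, zero_mul, Pi.single_zero, map_zero]
  have htrace : (conjDiagonal U (Pi.single i (p i)) * conjDiagonal V (Pi.single j 1)).trace =
      0 := by
    rw [← one_mul (p i), Pi.single_mul_left, map_mul, Matrix.mul_assoc, h.mul_eq_zero hker,
      Matrix.mul_zero, trace_zero]
  rw [trace_conjDiagonal_mul_conjDiagonal, Complex.ofReal_eq_zero] at htrace
  simpa [Pi.single_apply, ite_mul, mul_ite] using htrace

-- In the eigenbases this is `sub_le_mul_log_sub_log` averaged with the weights `normSq (U⁻¹ * V)`.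
lemma re_trace_sub_re_trace_le_relEnt (hρ : ρ.PosSemidef) (hτ : τ.PosSemidef)
    (h : SupportLE ρ τ) : ρ.trace.re - τ.trace.re ≤ relEnt ρ τ := by
  obtain ⟨U, p, hp, rfl⟩ := exists_nonneg_eq_conjDiagonal hρ
  obtain ⟨V, q, hq, rfl⟩ := exists_nonneg_eq_conjDiagonal hτ
  have htrρ := trace_conjDiagonal_mul_conjDiagonal U V p 1
  have htrτ := trace_conjDiagonal_mul_conjDiagonal U V 1 q
  rw [map_one, Matrix.mul_one] at htrρ
  rw [map_one, Matrix.one_mul] at htrτ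
  rw [htrρ, htrτ, Complex.ofReal_re, Complex.ofReal_re, relEnt_conjDiagonal,
    ← Finset.sum_sub_distrib]
  simp only [← Finset.sum_sub_distrib, ← sub_mul, Pi.one_apply, mul_one, one_mul]
  refine Finset.sum_le_sum fun i _ => Finset.sum_le_sum fun j _ => ?_
  obtain hj | hj := (hq j).eq_or_lt
  · have hzero := h.mul_normSq_eq_zero hj.symm i
    rw [mul_right_comm, hzero, zero_mul, sub_mul, hzero, ← hj, zero_mul, sub_zero]
  · exact mul_le_mul_of_nonneg_right (sub_le_mul_log_sub_log (hp i) hj) (Complex.normSq_nonneg _)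

lemma relEntE_nonneg (hρ : ρ.PosSemidef) (hτ : τ.PosSemidef) (h : τ.trace ≤ ρ.trace) :
    0 ≤ relEntE ρ τ := by
  by_cases hs : SupportLE ρ τ
  · rw [relEntE_of_supportLE hs, EReal.coe_nonneg]
    linarith [re_trace_sub_re_trace_le_relEnt hρ hτ hs, (Complex.le_def.1 h).1]
  · rw [relEntE_of_not_supportLE hs]
    exact le_top

end RelativeEntropy

section PartialTrace

variable {m l R : Type*}

variable [Fintype l]

/-- The partial trace over the second tensor factor. -/
def traceRight [AddCommMonoid R] (ρ : Matrix (m × l) (m × l) R) : Matrix m m R :=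
  ∑ b, ρ.submatrix (·, b) (·, b)

/-- The partial trace over the first tensor factor, encoded as `traceRight` after exchanging
the factors. -/
def traceLeft [AddCommMonoid R] (ρ : Matrix (l × m) (l × m) R) : Matrix m m R :=
  traceRight (ρ.submatrix (Equiv.prodComm m l) (Equiv.prodComm m l))

lemma traceRight_apply [AddCommMonoid R] (ρ : Matrix (m × l) (m × l) R) (a a' : m) :
    traceRight ρ a a' = ∑ b, ρ (a, b) (a', b) := by
  simp [traceRight, Matrix.sum_apply]

lemma traceLeft_apply [AddCommMonoid R] (ρ : Matrix (l × m) (l × m) R) (b b' : m) :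
    traceLeft ρ b b' = ∑ a, ρ (a, b) (a, b') :=
  traceRight_apply _ b b'

lemma posSemidef_traceRight {ρ : Matrix (m × l) (m × l) ℂ} (hρ : ρ.PosSemidef) :
    (traceRight ρ).PosSemidef :=
  posSemidef_sum _ fun _ _ => hρ.submatrix _

lemma posSemidef_traceLeft {ρ : Matrix (l × m) (l × m) ℂ} (hρ : ρ.PosSemidef) :
    (traceLeft ρ).PosSemidef :=
  posSemidef_traceRight (hρ.submatrix _)

variable [Fintype m]

lemma trace_traceRight [AddCommMonoid R] (ρ : Matrix (m × l) (m × l) R) :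
    (traceRight ρ).trace = ρ.trace := by
  simp only [Matrix.trace, diag_apply, traceRight_apply, Fintype.sum_prod_type]

lemma trace_traceLeft [AddCommMonoid R] (ρ : Matrix (m × l) (m × l) R) :
    (traceLeft ρ).trace = ρ.trace := by
  rw [traceLeft, trace_traceRight, trace_submatrix_equiv]

lemma traceRight_mul_kronecker_one [CommSemiring R] [DecidableEq l] (ρ : Matrix (m × l) (m × l) R)
    (X : Matrix m m R) : traceRight (ρ * (X ⊗ₖ 1)) = traceRight ρ * X := by
  ext a a'
  simp only [traceRight_apply, Matrix.mul_apply, kroneckerMap_apply, Fintype.sum_prod_type,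
    one_apply, mul_ite, mul_one, mul_zero, Finset.sum_ite_eq', Finset.mem_univ, if_true,
    Finset.sum_mul]
  exact Finset.sum_comm

lemma traceLeft_mul_one_kronecker [CommSemiring R] [DecidableEq m] (ρ : Matrix (m × l) (m × l) R)
    (X : Matrix l l R) : traceLeft (ρ * (1 ⊗ₖ X)) = traceLeft ρ * X := by
  rw [traceLeft, ← submatrix_mul_equiv _ _ _ (Equiv.prodComm l m), kronecker_submatrix_prodComm,
    traceRight_mul_kronecker_one, traceLeft]

lemma trace_mul_kronecker_one [CommSemiring R] [DecidableEq l] (ρ : Matrix (m × l) (m × l) R)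
    (X : Matrix m m R) : (ρ * (X ⊗ₖ 1)).trace = (traceRight ρ * X).trace := by
  rw [← traceRight_mul_kronecker_one, trace_traceRight]

lemma trace_mul_one_kronecker [CommSemiring R] [DecidableEq m] (ρ : Matrix (m × l) (m × l) R)
    (X : Matrix l l R) : (ρ * (1 ⊗ₖ X)).trace = (traceLeft ρ * X).trace := by
  rw [← traceLeft_mul_one_kronecker, trace_traceLeft]

variable {ρ : Matrix (m × l) (m × l) ℂ} {A : Matrix m m ℂ} {B : Matrix l l ℂ}

open scoped MatrixOrder in
lemma mul_kronecker_one_eq_zero [DecidableEq l] (hρ : ρ.PosSemidef) {X : Matrix m m ℂ}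
    (hX : traceRight ρ * X = 0) : ρ * (X ⊗ₖ 1) = 0 := by
  classical
  obtain ⟨S, hS⟩ := CStarAlgebra.nonneg_iff_eq_star_mul_self.1 hρ.nonneg
  have hS : ρ = Sᴴ * S := hS
  have htrace : ((S * (X ⊗ₖ 1))ᴴ * (S * (X ⊗ₖ 1))).trace = 0 := by
    rw [conjTranspose_mul, Matrix.mul_assoc, Matrix.trace_mul_comm, ← Matrix.mul_assoc, ← hS,
      conjTranspose_kronecker, conjTranspose_one, Matrix.mul_assoc, ← mul_kronecker_mul,
      Matrix.mul_one, trace_mul_kronecker_one, ← Matrix.mul_assoc, hX, Matrix.zero_mul,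
      trace_zero]
  rw [hS, conjTranspose_mul_self_mul_eq_zero]
  exact trace_conjTranspose_mul_self_eq_zero_iff.1 htrace

lemma exists_eq_mul_kronecker_one [DecidableEq l] (hρ : ρ.PosSemidef) :
    ∃ G, ρ = ρ * ((G * traceRight ρ) ⊗ₖ 1) := by
  classical
  obtain ⟨G, hG⟩ := exists_mul_mul_self_eq (traceRight ρ)
  have hker : ρ * ((1 - G * traceRight ρ) ⊗ₖ 1) = 0 := mul_kronecker_one_eq_zero hρ
    (by rw [Matrix.mul_sub, Matrix.mul_one, ← Matrix.mul_assoc, hG, sub_self])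
  have hsplit : (1 : Matrix (m × l) (m × l) ℂ) =
      (1 - G * traceRight ρ) ⊗ₖ 1 + (G * traceRight ρ) ⊗ₖ 1 := by
    rw [← add_kronecker, sub_add_cancel, one_kronecker_one]
  refine ⟨G, ?_⟩
  calc ρ = ρ * ((1 - G * traceRight ρ) ⊗ₖ 1 + (G * traceRight ρ) ⊗ₖ 1) := by
        rw [← hsplit, Matrix.mul_one]
    _ = ρ * ((G * traceRight ρ) ⊗ₖ 1) := by rw [Matrix.mul_add, hker, zero_add]

lemma exists_eq_mul_one_kronecker [DecidableEq m] (hρ : ρ.PosSemidef) :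
    ∃ H, ρ = ρ * (1 ⊗ₖ (H * traceLeft ρ)) := by
  obtain ⟨H, hH⟩ := exists_eq_mul_kronecker_one (hρ.submatrix (Equiv.prodComm l m))
  refine ⟨H, (reindex (Equiv.prodComm m l) (Equiv.prodComm m l)).injective ?_⟩
  rw [reindex_apply, reindex_apply, Equiv.prodComm_symm,
    ← submatrix_mul_equiv _ _ _ (Equiv.prodComm l m), kronecker_submatrix_prodComm]
  exact hH

lemma SupportLE.traceRight (h : SupportLE ρ (A ⊗ₖ B)) : SupportLE (traceRight ρ) A := by
  classical
  obtain ⟨Y, rfl⟩ := supportLE_iff_exists_eq_mul.1 h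
  have hAB : A ⊗ₖ B = (1 ⊗ₖ B) * (A ⊗ₖ 1) := by
    rw [← mul_kronecker_mul, Matrix.one_mul, Matrix.mul_one]
  rw [hAB, ← Matrix.mul_assoc, traceRight_mul_kronecker_one]
  exact supportLE_mul_left _ _

lemma SupportLE.traceLeft (h : SupportLE ρ (A ⊗ₖ B)) : SupportLE (traceLeft ρ) B := by
  have hswap := h.submatrix (Equiv.prodComm l m)
  rw [kronecker_submatrix_prodComm] at hswap
  exact hswap.traceRight

lemma supportLE_kronecker_traceRight_traceLeft (hρ : ρ.PosSemidef) :
    SupportLE ρ (traceRight ρ ⊗ₖ traceLeft ρ) := by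
  classical
  obtain ⟨G, hG⟩ := exists_eq_mul_kronecker_one hρ
  obtain ⟨H, hH⟩ := exists_eq_mul_one_kronecker hρ
  refine supportLE_iff_exists_eq_mul.2 ⟨ρ * (G ⊗ₖ H), ?_⟩
  calc ρ = ρ * (1 ⊗ₖ (H * traceLeft ρ)) * ((G * traceRight ρ) ⊗ₖ 1) := by rw [← hH, ← hG]
    _ = ρ * (G ⊗ₖ H) * (traceRight ρ ⊗ₖ traceLeft ρ) := by
      rw [Matrix.mul_assoc, Matrix.mul_assoc, ← mul_kronecker_mul, ← mul_kronecker_mul,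
        Matrix.one_mul, Matrix.mul_one]

variable [DecidableEq m] [DecidableEq l]

lemma trace_mul_mlog_kronecker (hA : A.IsHermitian) (hB : B.IsHermitian)
    (h : SupportLE ρ (A ⊗ₖ B)) :
    (ρ * mlog (A ⊗ₖ B)).trace = (traceRight ρ * mlog A).trace + (traceLeft ρ * mlog B).trace := by
  have hlog : ρ * mlog (A ⊗ₖ B) = ρ * (mlog A ⊗ₖ 1 + 1 ⊗ₖ mlog B) := by
    obtain ⟨Y, rfl⟩ := supportLE_iff_exists_eq_mul.1 h
    rw [Matrix.mul_assoc, kronecker_mul_mlog_kronecker hA hB, Matrix.mul_assoc]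
  rw [hlog, Matrix.mul_add, trace_add, trace_mul_kronecker_one, trace_mul_one_kronecker]

lemma relEnt_kronecker (hρ : ρ.PosSemidef) (hA : A.IsHermitian) (hB : B.IsHermitian)
    (h : SupportLE ρ (A ⊗ₖ B)) :
    relEnt ρ (A ⊗ₖ B) = relEnt (traceRight ρ) A + relEnt (traceLeft ρ) B +
      relEnt ρ (traceRight ρ ⊗ₖ traceLeft ρ) := by
  simp only [relEnt, Matrix.mul_sub, trace_sub, trace_mul_mlog_kronecker hA hB h,
    trace_mul_mlog_kronecker (posSemidef_traceRight hρ).isHermitian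
      (posSemidef_traceLeft hρ).isHermitian (supportLE_kronecker_traceRight_traceLeft hρ),
    Complex.sub_re, Complex.add_re]
  ring

-- By Klein's inequality the mutual information `D(ρ ‖ ρ₁ ⊗ ρ₂)` is at least `tr ρ - (tr ρ)²`.
lemma relEnt_kronecker_traceRight_traceLeft_nonneg (hρ : ρ.PosSemidef) (htr : ρ.trace ≤ 1) :
    0 ≤ relEnt ρ (traceRight ρ ⊗ₖ traceLeft ρ) := by
  have hKlein := re_trace_sub_re_trace_le_relEnt hρ
    ((posSemidef_traceRight hρ).kronecker (posSemidef_traceLeft hρ))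
    (supportLE_kronecker_traceRight_traceLeft hρ)
  obtain ⟨h0, him⟩ := Complex.le_def.1 hρ.trace_nonneg
  have h1 : ρ.trace.re ≤ 1 := (Complex.le_def.1 htr).1
  rw [trace_kronecker, trace_traceRight, trace_traceLeft, Complex.mul_re, ← him] at hKlein
  simp only [Complex.zero_re, Complex.zero_im] at h0 hKlein
  nlinarith

lemma relEntE_traceRight_add_relEntE_traceLeft_le (hρ : ρ.PosSemidef) (htr : ρ.trace ≤ 1)
    (hA : A.IsHermitian) (hB : B.IsHermitian) :
    relEntE (traceRight ρ) A + relEntE (traceLeft ρ) B ≤ relEntE ρ (A ⊗ₖ B) := by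
  by_cases h : SupportLE ρ (A ⊗ₖ B)
  · rw [relEntE_of_supportLE h, relEntE_of_supportLE (h.traceRight),
      relEntE_of_supportLE (h.traceLeft), ← EReal.coe_add, EReal.coe_le_coe_iff,
      relEnt_kronecker hρ hA hB h]
    linarith [relEnt_kronecker_traceRight_traceLeft_nonneg hρ htr]
  · rw [relEntE_of_not_supportLE h]
    exact le_top

end PartialTrace

section TensorPower

variable {n : ℕ} {ι : Type*} [Fintype ι] {σ : Matrix (Fin n) (Fin n) ℂ}

lemma tensorPowOn_conjTranspose (ι : Type*) [Fintype ι] (σ : Matrix (Fin n) (Fin n) ℂ) :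
    (tensorPowOn ι σ)ᴴ = tensorPowOn ι σᴴ := by
  ext x y
  simp [tensorPowOn]

lemma isHermitian_tensorPowOn (hσ : σ.IsHermitian) : (tensorPowOn ι σ).IsHermitian := by
  rw [IsHermitian, tensorPowOn_conjTranspose, hσ]

lemma tensorPowOn_append (k M : ℕ) (σ : Matrix (Fin n) (Fin n) ℂ) :
    (tensorPowOn (Fin (k + M)) σ).submatrix (Fin.appendEquiv k M) (Fin.appendEquiv k M) =
      tensorPowOn (Fin k) σ ⊗ₖ tensorPowOn (Fin M) σ := by
  ext ⟨x, y⟩ ⟨x', y'⟩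
  simp [tensorPowOn, Fin.appendEquiv, Fin.prod_univ_add]

lemma tensorPowOn_mul [DecidableEq ι] (A B : Matrix (Fin n) (Fin n) ℂ) :
    tensorPowOn ι (A * B) = tensorPowOn ι A * tensorPowOn ι B := by
  ext x y
  simp only [tensorPowOn, of_apply, Matrix.mul_apply, ← Finset.prod_mul_distrib]
  exact Fintype.prod_sum fun l c => A (x l) c * B c (y l)

lemma trace_tensorPowOn [DecidableEq ι] (σ : Matrix (Fin n) (Fin n) ℂ) :
    (tensorPowOn ι σ).trace = σ.trace ^ Fintype.card ι := by
  simp only [Matrix.trace, diag_apply, tensorPowOn, of_apply]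
  rw [← Fintype.prod_sum fun (_ : ι) c => σ c c, Finset.prod_const, Finset.card_univ]

open scoped MatrixOrder in
lemma posSemidef_tensorPowOn (hσ : σ.PosSemidef) : (tensorPowOn ι σ).PosSemidef := by
  classical
  obtain ⟨S, hS⟩ := CStarAlgebra.nonneg_iff_eq_star_mul_self.1 hσ.nonneg
  rw [hS, star_eq_conjTranspose, tensorPowOn_mul, ← tensorPowOn_conjTranspose]
  exact posSemidef_conjTranspose_mul_self _

end TensorPower

section Marginal

variable {n k M : ℕ}

/-- The sites of `Fin (k + M)` beyond the first `k`, the index type traced out by `kMarginal`. -/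
def tailEquiv (k M : ℕ) : Fin M ≃ {i : Fin (k + M) // ¬ (i : ℕ) < k} where
  toFun j := ⟨Fin.natAdd k j, by simp⟩
  invFun i := ⟨i.1 - k, by omega⟩
  left_inv j := by ext; simp
  right_inv i := by ext; simp; omega

lemma firstExt_eq_append (x : Fin k → Fin n) (g : {i : Fin (k + M) // ¬ (i : ℕ) < k} → Fin n) :
    firstExt x g = Fin.append x (g ∘ tailEquiv k M) := by
  ext i
  refine Fin.addCases (fun j => ?_) (fun j => ?_) i
  · simp [firstExt]
  · simp [firstExt, tailEquiv]

lemma kMarginal_apply (ρ : Matrix (Fin (k + M) → Fin n) (Fin (k + M) → Fin n) ℂ)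
    (x y : Fin k → Fin n) :
    kMarginal k ρ x y = ∑ g : Fin M → Fin n, ρ (Fin.append x g) (Fin.append y g) := by
  simp only [kMarginal, of_apply, firstExt_eq_append]
  exact ((tailEquiv k M).symm.arrowCongr (Equiv.refl (Fin n))).sum_comp
    fun g => ρ (Fin.append x g) (Fin.append y g)

lemma kMarginal_eq_traceRight (ρ : Matrix (Fin (k + M) → Fin n) (Fin (k + M) → Fin n) ℂ) :
    kMarginal k ρ = traceRight (ρ.submatrix (Fin.appendEquiv k M) (Fin.appendEquiv k M)) := by
  ext x y
  rw [kMarginal_apply, traceRight_apply]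
  rfl

/-- The marginal of a state on `k + M` sites on the last `M` of them. -/
def tailMarginal (k : ℕ) (ρ : Matrix (Fin (k + M) → Fin n) (Fin (k + M) → Fin n) ℂ) :
    Matrix (Fin M → Fin n) (Fin M → Fin n) ℂ :=
  traceLeft (ρ.submatrix (Fin.appendEquiv k M) (Fin.appendEquiv k M))

lemma tailMarginal_apply (ρ : Matrix (Fin (k + M) → Fin n) (Fin (k + M) → Fin n) ℂ)
    (x y : Fin M → Fin n) :
    tailMarginal k ρ x y = ∑ a : Fin k → Fin n, ρ (Fin.append a x) (Fin.append a y) :=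
  traceLeft_apply _ x y

variable {ρ : Matrix (Fin (k + M) → Fin n) (Fin (k + M) → Fin n) ℂ}

lemma posSemidef_tailMarginal (hρ : ρ.PosSemidef) : (tailMarginal k ρ).PosSemidef :=
  posSemidef_traceLeft (hρ.submatrix _)

lemma trace_tailMarginal (ρ : Matrix (Fin (k + M) → Fin n) (Fin (k + M) → Fin n) ℂ) :
    (tailMarginal k ρ).trace = ρ.trace := by
  rw [tailMarginal, trace_traceLeft, trace_submatrix_equiv]

lemma exchangeable_tailMarginal (h : Exchangeable ρ) : Exchangeable (tailMarginal k ρ) := by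
  intro π x y
  have happend (a : Fin k → Fin n) (z : Fin M → Fin n) : Fin.append a (z ∘ π) = Fin.append a z ∘
      finSumFinEquiv.permCongr (Equiv.sumCongr (Equiv.refl (Fin k)) π) := by
    ext i
    refine Fin.addCases (fun j => ?_) (fun j => ?_) i <;> simp [Equiv.permCongr_apply]
  simp only [tailMarginal_apply, happend, h _ _ _]

/-- The permutation of `k + (k + M)` sites that exchanges the first two blocks of length `k`. -/
def swapBlocks (k M : ℕ) : Equiv.Perm (Fin (k + (k + M))) :=
  (((Equiv.refl (Fin k)).sumCongr finSumFinEquiv).trans finSumFinEquiv).permCongr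
    (((Equiv.sumAssoc (Fin k) (Fin k) (Fin M)).symm.trans
      ((Equiv.sumComm _ _).sumCongr (Equiv.refl _))).trans (Equiv.sumAssoc _ _ _))

lemma append_append_comp_swapBlocks (a b : Fin k → Fin n) (g : Fin M → Fin n) :
    Fin.append a (Fin.append b g) ∘ swapBlocks k M = Fin.append b (Fin.append a g) := by
  ext i
  refine Fin.addCases (fun j => ?_) (fun j => ?_) i
  · simp [swapBlocks, Equiv.permCongr_apply]
  · refine Fin.addCases (fun j => ?_) (fun j => ?_) j <;>
      simp [swapBlocks, Equiv.permCongr_apply]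

lemma kMarginal_tailMarginal (h : Exchangeable ρ) (hkM : k ≤ M) :
    kMarginal k (tailMarginal k ρ) = kMarginal k ρ := by
  obtain ⟨M, rfl⟩ := Nat.exists_eq_add_of_le hkM
  ext x y
  simp only [kMarginal_apply, tailMarginal_apply]
  rw [← (Fin.appendEquiv k M).sum_comp, Fintype.sum_prod_type, Finset.sum_comm]
  refine Finset.sum_congr rfl fun g _ => Finset.sum_congr rfl fun a _ => ?_
  rw [← h (swapBlocks k M), append_append_comp_swapBlocks, append_append_comp_swapBlocks]
  rfl

lemma relEntE_kMarginal_add_relEntE_tailMarginal_le (hρ : ρ.PosSemidef) (htr : ρ.trace ≤ 1)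
    {σ : Matrix (Fin n) (Fin n) ℂ} (hσ : σ.IsHermitian) :
    relEntE (kMarginal k ρ) (tensorPowOn (Fin k) σ) +
      relEntE (tailMarginal k ρ) (tensorPowOn (Fin M) σ) ≤
        relEntE ρ (tensorPowOn (Fin (k + M)) σ) := by
  rw [← relEntE_submatrix hρ.isHermitian (isHermitian_tensorPowOn hσ) (Fin.appendEquiv k M),
    tensorPowOn_append, kMarginal_eq_traceRight]
  exact relEntE_traceRight_add_relEntE_traceLeft_le (hρ.submatrix _)
    (by rwa [trace_submatrix_equiv]) (isHermitian_tensorPowOn hσ) (isHermitian_tensorPowOn hσ)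

lemma relEntE_tensorPowOn_nonneg {N : ℕ} {ρ : Matrix (Fin N → Fin n) (Fin N → Fin n) ℂ}
    (hρ : ρ.PosSemidef) (hρtr : ρ.trace = 1) {σ : Matrix (Fin n) (Fin n) ℂ} (hσ : σ.PosSemidef)
    (hσtr : σ.trace ≤ 1) : 0 ≤ relEntE ρ (tensorPowOn (Fin N) σ) := by
  refine relEntE_nonneg hρ (posSemidef_tensorPowOn hσ) ?_
  rw [hρtr, trace_tensorPowOn]
  exact pow_le_one₀ hσ.trace_nonneg hσtr

lemma nsmul_relEntE_kMarginal_le {m N : ℕ} (hmN : m * k ≤ N)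
    {ρ : Matrix (Fin N → Fin n) (Fin N → Fin n) ℂ} (hρ : ρ.PosSemidef) (hρtr : ρ.trace = 1)
    (hexch : Exchangeable ρ) {σ : Matrix (Fin n) (Fin n) ℂ} (hσ : σ.PosSemidef)
    (hσtr : σ.trace ≤ 1) :
    m • relEntE (kMarginal k ρ) (tensorPowOn (Fin k) σ) ≤
      relEntE ρ (tensorPowOn (Fin N) σ) := by
  induction m generalizing N with
  | zero =>
    rw [zero_nsmul]
    exact relEntE_tensorPowOn_nonneg hρ hρtr hσ hσtr
  | succ m ih =>
    rw [add_one_mul] at hmN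
    obtain ⟨M, rfl⟩ := Nat.exists_eq_add_of_le (le_of_add_le_right hmN)
    have hmM : m * k ≤ M := by omega
    have htail : m • relEntE (kMarginal k ρ) (tensorPowOn (Fin k) σ) ≤
        relEntE (tailMarginal k ρ) (tensorPowOn (Fin M) σ) := by
      have ih := ih hmM (posSemidef_tailMarginal hρ) ((trace_tailMarginal ρ).trans hρtr)
        (exchangeable_tailMarginal hexch)
      obtain rfl | hm := m.eq_zero_or_pos
      · simpa using ih
      · rwa [kMarginal_tailMarginal hexch ((Nat.le_mul_of_pos_left k hm).trans hmM)] at ih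
    rw [succ_nsmul']
    exact (add_le_add_right htail _).trans
      (relEntE_kMarginal_add_relEntE_tailMarginal_le hρ hρtr.le hσ.isHermitian)

end Marginal

theorem marginal_relEnt_bound_general {n N k : ℕ} (hk : 1 ≤ k) (hkN : k ≤ N)
    (ρN : Matrix (Fin N → Fin n) (Fin N → Fin n) ℂ)
    (hρ : ρN.PosSemidef) (hρtr : ρN.trace = 1) (hexch : Exchangeable ρN)
    (σ : Matrix (Fin n) (Fin n) ℂ) (hσ : σ.PosSemidef) (hσtr : σ.trace ≤ 1) :
    relEntE (kMarginal k ρN) (tensorPowOn (Fin k) σ) ≤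
        (((N : ℝ) / ((N / k : ℕ) : ℝ) * (1 / (N : ℝ)) : ℝ) : EReal) *
          relEntE ρN (tensorPowOn (Fin N) σ) ∧
      (((N : ℝ) / ((N / k : ℕ) : ℝ) * (1 / (N : ℝ)) : ℝ) : EReal) *
          relEntE ρN (tensorPowOn (Fin N) σ) ≤
        ((2 * (k : ℝ) / (N : ℝ) : ℝ) : EReal) *
          relEntE ρN (tensorPowOn (Fin N) σ) := by
  have hblocks := nsmul_relEntE_kMarginal_le (Nat.div_mul_le_self N k) hρ hρtr hexch hσ hσtr
  have hN : (0 : ℝ) < N := by exact_mod_cast hk.trans hkN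
  have hq : (0 : ℝ) < (N / k : ℕ) := by exact_mod_cast (Nat.one_le_div_iff hk).2 hkN
  have hcoeff : (N : ℝ) / (N / k : ℕ) * (1 / N) = 1 / (N / k : ℕ) := by field_simp
  have hNk : N ≤ 2 * k * (N / k) := by
    have hlt := Nat.lt_mul_div_succ N hk
    have hle := Nat.le_mul_of_pos_right k ((Nat.one_le_div_iff hk).2 hkN)
    linarith
  rw [hcoeff]
  constructor
  · rw [one_div, EReal.coe_inv, ← EReal.div_eq_inv_mul,
      EReal.le_div_iff_mul_le (EReal.coe_pos.2 hq) (EReal.coe_ne_top _), mul_comm,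
      EReal.coe_coe_eq_natCast, ← EReal.nsmul_eq_mul]
    exact hblocks
  · refine mul_le_mul_of_nonneg_right ?_ (relEntE_tensorPowOn_nonneg hρ hρtr hσ hσtr)
    rw [EReal.coe_le_coe_iff, div_le_div_iff₀ hq hN, one_mul]
    exact_mod_cast hNk

/-- Marginal entropy bound for exchangeable states:
`D(ρ^{N:(k)}‖σ^{⊗k}) ≤ (N/⌊N/k⌋)·(1/N)·D(ρ^N‖σ^{⊗N}) ≤ (2k/N)·D(ρ^N‖σ^{⊗N})`. -/
theorem marginal_relEnt_bound {n N k : ℕ} (hk : 1 ≤ k) (hkN : 2 * k ≤ N)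
    (ρN : Matrix (Fin N → Fin n) (Fin N → Fin n) ℂ)
    (hρ : ρN.PosSemidef) (hρtr : ρN.trace = 1) (hexch : Exchangeable ρN)
    (σ : Matrix (Fin n) (Fin n) ℂ) (hσ : σ.PosSemidef) (hσtr : σ.trace = 1) :
    relEntE (kMarginal k ρN) (tensorPowOn (Fin k) σ) ≤
        (((N : ℝ) / ((N / k : ℕ) : ℝ) * (1 / (N : ℝ)) : ℝ) : EReal) *
          relEntE ρN (tensorPowOn (Fin N) σ) ∧
      (((N : ℝ) / ((N / k : ℕ) : ℝ) * (1 / (N : ℝ)) : ℝ) : EReal) *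
          relEntE ρN (tensorPowOn (Fin N) σ) ≤
        ((2 * (k : ℝ) / (N : ℝ) : ℝ) : EReal) *
          relEntE ρN (tensorPowOn (Fin N) σ) :=
  marginal_relEnt_bound_general hk (by omega) ρN hρ hρtr hexch σ hσ hσtr.le
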